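/- Let A and B be C*-algebras, let A₁, A₂ be closed two-sided ideals of A and B₁, B₂ be closed two-sided ideals of B. Then (A₁ ⊗̂ B₁) ∩ (A₂ ⊗̂ B₂) = (A₁ ∩ A₂) ⊗̂ (B₁ ∩ B₂) as subsets of A ⊗̂ B. -/

import Mathlib

open scoped TensorProduct
open Pointwise

universe u

noncomputable section

/-- A C⋆-norm on a complex `*`-algebra.  On a matrix algebra over a C⋆-algebra such a
norm is unique, namely the canonical C⋆-norm. -/
structure IsCStarNorm {M : Type*} [NonUnitalRing M] [StarRing M] [Module ℂ M]
    (N : M → ℝ) : Prop where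
  add_le : ∀ x y, N (x + y) ≤ N x + N y
  smul_eq : ∀ (c : ℂ) (x : M), N (c • x) = ‖c‖ * N x
  eq_zero_of : ∀ x, N x = 0 → x = 0
  mul_le : ∀ x y, N (x * y) ≤ N x * N y
  star_mul_self : ∀ x, N (star x * x) = N x * N x

/-- The operator space projective tensor norm `‖·‖_∧` on the algebraic tensor product
`A ⊗ B`, relative to given families of matrix norms on `A` and `B`:
`‖u‖_∧ = inf { ‖α‖ ‖v‖ ‖w‖ ‖β‖ : u = α (v ⊗ w) β }` where `v ∈ M_p(A)`, `w ∈ M_q(B)`,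
`α ∈ M_{1,pq}(ℂ)` and `β ∈ M_{pq,1}(ℂ)` (row and column vectors carrying the Euclidean
norm, which is their norm as scalar matrices). -/
noncomputable def osProjNorm {A B : Type u}
    [AddCommGroup A] [Module ℂ A] [AddCommGroup B] [Module ℂ B]
    (NA : ∀ p : ℕ, Matrix (Fin p) (Fin p) A → ℝ)
    (NB : ∀ q : ℕ, Matrix (Fin q) (Fin q) B → ℝ) (u : A ⊗[ℂ] B) : ℝ :=
  sInf { r : ℝ | ∃ (p q : ℕ) (α : Fin p × Fin q → ℂ) (v : Matrix (Fin p) (Fin p) A)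
      (w : Matrix (Fin q) (Fin q) B) (β : Fin p × Fin q → ℂ),
      u = ∑ ik : Fin p × Fin q, ∑ jl : Fin p × Fin q,
            (α ik * β jl) • (v ik.1 jl.1 ⊗ₜ[ℂ] w ik.2 jl.2) ∧
      r = Real.sqrt (∑ ik, ‖α ik‖ ^ 2) * NA p v * NB q w *
            Real.sqrt (∑ jl, ‖β jl‖ ^ 2) }

/-- `X` is a completion of the algebraic tensor product `A ⊗ B` with respect to the
norm `ν`, via the (necessarily isometric) dense embedding `ι`, and the multiplication and
involution of `X` are the canonical ones induced from `A` and `B`.  Applied with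
`ν = osProjNorm NA NB` (for the canonical matrix C⋆-norms `NA`, `NB`) this characterizes
the Banach `*`-algebra `A ⊗̂ B` (the operator space projective tensor product) up to
isometric `*`-isomorphism; applied with `ν = bsProjNorm` it characterizes the Banach
space projective tensor product `A ⊗_γ B`. -/
structure IsTensorCompletion {A B : Type u} [NonUnitalRing A] [StarRing A] [Module ℂ A]
    [NonUnitalRing B] [StarRing B] [Module ℂ B] (ν : A ⊗[ℂ] B → ℝ)
    (X : Type u) [NonUnitalNormedRing X] [StarRing X] [NormedSpace ℂ X] [CompleteSpace X]
    (ι : A ⊗[ℂ] B →ₗ[ℂ] X) : Prop where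
  norm_eq : ∀ u, ‖ι u‖ = ν u
  dense : DenseRange ι
  mul_tmul : ∀ (a c : A) (b d : B),
    ι (a ⊗ₜ[ℂ] b) * ι (c ⊗ₜ[ℂ] d) = ι ((a * c) ⊗ₜ[ℂ] (b * d))
  star_tmul : ∀ (a : A) (b : B), star (ι (a ⊗ₜ[ℂ] b)) = ι (star a ⊗ₜ[ℂ] star b)

/-- The product ideal `S ⊗̂ T`: the closure in `X` (a completion of `A ⊗ B`) of the span of
elementary tensors `a ⊗ b` with `a ∈ S`, `b ∈ T`. -/
def tensorIdeal {A B : Type u} [NonUnitalRing A] [StarRing A] [Module ℂ A]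
    [NonUnitalRing B] [StarRing B] [Module ℂ B]
    {X : Type u} [NonUnitalNormedRing X] [StarRing X] [NormedSpace ℂ X] [CompleteSpace X]
    (ι : A ⊗[ℂ] B →ₗ[ℂ] X) (S : Set A) (T : Set B) : Set X :=
  closure (ι '' (Submodule.span ℂ (Set.image2 (fun a b => a ⊗ₜ[ℂ] b) S T)))

/-- A closed prime (two-sided) ideal of a Banach algebra: a proper closed two-sided ideal `K`
such that whenever the product of two closed two-sided ideals is contained in `K`, one of them
is contained in `K`. -/
def IsClosedPrimeIdeal {Y : Type u} [NonUnitalNormedRing Y] (K : TwoSidedIdeal Y) : Prop :=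
  IsClosed (K : Set Y) ∧ (K : Set Y) ≠ Set.univ ∧
    ∀ I J : TwoSidedIdeal Y, IsClosed (I : Set Y) → IsClosed (J : Set Y) →
      (∀ x ∈ I, ∀ y ∈ J, x * y ∈ K) → (I : Set Y) ⊆ (K : Set Y) ∨ (J : Set Y) ⊆ (K : Set Y)

/-- An irreducible continuous `*`-representation of a Banach `*`-algebra `Y` on a complex
Hilbert space. -/
structure IrreducibleRepOn (Y : Type u)
    [NonUnitalNormedRing Y] [StarRing Y] [NormedSpace ℂ Y] where
  H : Type u
  [normH : NormedAddCommGroup H]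
  [ipsH : InnerProductSpace ℂ H]
  [csH : CompleteSpace H]
  π : Y →⋆ₙₐ[ℂ] (H →L[ℂ] H)
  continuous : Continuous π
  nonzero : ∃ y, π y ≠ 0
  irreducible : ∀ S : Submodule ℂ H, IsClosed (S : Set H) →
    (∀ y : Y, ∀ v ∈ S, π y v ∈ S) → S = ⊥ ∨ S = ⊤

/-- A primitive ideal: the kernel of an irreducible `*`-representation. -/
def IsPrimitiveIdeal {Y : Type u} [NonUnitalNormedRing Y] [StarRing Y] [NormedSpace ℂ Y]
    (K : TwoSidedIdeal Y) : Prop :=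
  ∃ ρ : IrreducibleRepOn Y, ∀ y, y ∈ K ↔ ρ.π y = 0

/-- A subset `K` of a ring is modular (as an ideal) if there is a relative unit `e`
with `x * e - x ∈ K` and `e * x - x ∈ K` for every `x`. -/
def IsModularIdealSet {Y : Type u} [NonUnitalRing Y] (K : Set Y) : Prop :=
  ∃ e : Y, ∀ x : Y, x * e - x ∈ K ∧ e * x - x ∈ K

/-- A maximal modular (two-sided) ideal: a modular ideal which is proper and maximal among
proper two-sided ideals. -/
def IsMaximalModularIdeal {Y : Type u} [NonUnitalRing Y] (K : TwoSidedIdeal Y) : Prop :=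
  IsModularIdealSet (K : Set Y) ∧ (K : Set Y) ≠ Set.univ ∧
    ∀ L : TwoSidedIdeal Y, (K : Set Y) ⊆ (L : Set Y) →
      (L : Set Y) = (K : Set Y) ∨ (L : Set Y) = Set.univ

/-- The operator norm of a `p × p` matrix of bounded operators on a Hilbert space `H`,
viewed as an operator on the `ℓ²`-direct sum `H ⊕ ⋯ ⊕ H`. -/
noncomputable def opMatrixNorm {H : Type u} [NormedAddCommGroup H] [InnerProductSpace ℂ H]
    {p : ℕ} (T : Matrix (Fin p) (Fin p) (H →L[ℂ] H)) : ℝ :=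
  sSup { r : ℝ | ∃ x : Fin p → H, (∑ i, ‖x i‖ ^ 2) ≤ 1 ∧
      r = Real.sqrt (∑ i, ‖∑ j, (T i j) (x j)‖ ^ 2) }

/-- An operator algebra structure on a Banach algebra `Y`: a bicontinuous algebra
homomorphism of `Y` into the bounded operators on some Hilbert space. -/
structure OperatorAlgebraEmbedding (Y : Type u) [NonUnitalNormedRing Y] [NormedSpace ℂ Y] where
  H : Type u
  [normH : NormedAddCommGroup H]
  [ipsH : InnerProductSpace ℂ H]
  [csH : CompleteSpace H]
  ρ : Y →ₙₐ[ℂ] (H →L[ℂ] H)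
  c : ℝ
  C : ℝ
  c_pos : 0 < c
  lower : ∀ y, c * ‖y‖ ≤ ‖ρ y‖
  upper : ∀ y, ‖ρ y‖ ≤ C * ‖y‖

/-- The matrix norms on `Y` induced by an operator algebra embedding, giving `Y` its
operator space structure: the norm of `v ∈ M_p(Y)` is the operator norm of the matrix
of operators obtained by applying the embedding entrywise. -/
noncomputable def OperatorAlgebraEmbedding.matrixNorm {Y : Type u}
    [NonUnitalNormedRing Y] [NormedSpace ℂ Y] (e : OperatorAlgebraEmbedding Y)
    (p : ℕ) (v : Matrix (Fin p) (Fin p) Y) : ℝ :=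
  letI := e.normH; letI := e.ipsH
  opMatrixNorm (v.map e.ρ)

/-- The Banach space projective tensor norm `‖·‖_γ` on the algebraic tensor product. -/
noncomputable def bsProjNorm {A B : Type u} [NonUnitalNormedRing A] [NormedSpace ℂ A]
    [NonUnitalNormedRing B] [NormedSpace ℂ B] (u : A ⊗[ℂ] B) : ℝ :=
  sInf { r : ℝ | ∃ (n : ℕ) (a : Fin n → A) (b : Fin n → B),
      u = ∑ i, a i ⊗ₜ[ℂ] b i ∧ r = ∑ i, ‖a i‖ * ‖b i‖ }

/-- A C⋆-algebra `A` is subhomogeneous if there is `n : ℕ` bounding the (finite)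
dimensions of all its irreducible `*`-representations. -/
def IsSubhomogeneous (A : Type u) [NonUnitalCStarAlgebra A] : Prop :=
  ∃ n : ℕ, ∀ ρ : IrreducibleRepOn A,
    letI := ρ.normH
    letI := ρ.ipsH
    FiniteDimensional ℂ ρ.H ∧ Module.finrank ℂ ρ.H ≤ n


open Filter Topology

theorem IsCStarNorm.nonneg' {M : Type*} [NonUnitalRing M] [StarRing M] [Module ℂ M]
    {N : M → ℝ} (h : IsCStarNorm N) (x : M) : 0 ≤ N x := by
  have h0 : N 0 = 0 := by simpa using h.smul_eq 0 0
  have h1 : N (-x) = N x := by simpa using h.smul_eq (-1) x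
  have h2 := h.add_le x (-x)
  rw [add_neg_cancel, h0, h1] at h2
  linarith

theorem IsCStarNorm.bound {A : Type*} [NonUnitalCStarAlgebra A]
    {N : A → ℝ} (h : IsCStarNorm N) (x : A) : N x ≤ 2 * ‖x‖ := by
  have key : ∀ (u : unitary (Unitization ℂ A)) (x y : A),
      (y : Unitization ℂ A) = (u : Unitization ℂ A) * (x : Unitization ℂ A) → N y = N x := by
    intro u x y hy
    have e : star y * y = star x * x := by
      apply Unitization.inr_injective (R := ℂ)
      rw [Unitization.inr_mul, Unitization.inr_mul, Unitization.inr_star, Unitization.inr_star, hy,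
        star_mul, mul_assoc, ← mul_assoc _ _ (x : Unitization ℂ A), Unitary.coe_star_mul_self,
        one_mul]
    have h1 := h.star_mul_self y
    rw [e, h.star_mul_self x] at h1
    exact ((mul_self_inj (h.nonneg' x) (h.nonneg' y)).1 h1).symm
  have mulbd : ∀ a x : A, N (a * x) ≤ 2 * ‖a‖ * N x := by
    intro a x
    obtain ⟨u, c, hc, hcn⟩ := CStarAlgebra.exists_sum_four_unitary (a : Unitization ℂ A)
    have : ∀ i, ∃ y : A, (y : Unitization ℂ A) = (u i : Unitization ℂ A) * (x : Unitization ℂ A) := by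
      intro i
      refine ⟨(u i : Unitization ℂ A).fst • x + (u i : Unitization ℂ A).snd * x, ?_⟩
      ext <;> simp
    choose y hy using this
    have e : a * x = ∑ i, c i • y i := by
      apply Unitization.inr_injective (R := ℂ)
      rw [Unitization.inr_mul, hc]
      simp [Fin.sum_univ_four, hy, add_mul]
    have hn : ∀ i, N (c i • y i) ≤ ‖a‖ / 2 * N x := by
      intro i
      rw [h.smul_eq, key _ _ _ (hy i)]
      have := hcn i
      rw [Unitization.norm_inr] at this
      exact mul_le_mul_of_nonneg_right this (h.nonneg' x)
    rw [e, Fin.sum_univ_four]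
    have h1 := h.add_le (c 0 • y 0 + c 1 • y 1 + c 2 • y 2) (c 3 • y 3)
    have h2 := h.add_le (c 0 • y 0 + c 1 • y 1) (c 2 • y 2)
    have h3 := h.add_le (c 0 • y 0) (c 1 • y 1)
    linarith [hn 0, hn 1, hn 2, hn 3]
  have h1 := mulbd (star x) x
  rw [h.star_mul_self, norm_star] at h1
  rcases (h.nonneg' x).eq_or_lt with h0 | h0
  · rw [← h0]; positivity
  · exact le_of_mul_le_mul_right h1 h0

theorem IsCStarNorm.one {A : Type*} [NonUnitalCStarAlgebra A]
    {N : Matrix (Fin 1) (Fin 1) A → ℝ} (h : IsCStarNorm N) :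
    IsCStarNorm (fun a : A => N (Matrix.of fun _ _ => a)) where
  add_le x y := h.add_le _ _
  smul_eq c x := h.smul_eq c _
  eq_zero_of x hx := by
    have := congrFun (congrFun (h.eq_zero_of _ hx) 0) 0
    simpa using this
  mul_le x y := by
    refine le_of_eq_of_le ?_ (h.mul_le _ _)
    congr 1
    ext i j
    simp [Matrix.mul_apply]
  star_mul_self x := by
    refine Eq.trans ?_ (h.star_mul_self _)
    congr 1
    ext i j
    simp [Matrix.mul_apply, Matrix.star_apply]

theorem exists_approx_self (A : Type*) [NonUnitalCStarAlgebra A] :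
    ∃ l : Filter A, l.NeBot ∧ (∀ᶠ e in l, ‖e‖ ≤ 1) ∧ (∀ᶠ e in l, star e = e) ∧
      ∀ a : A, Tendsto (fun e => a * e) l (𝓝 a) := by
  letI := CStarAlgebra.spectralOrder A
  haveI := CStarAlgebra.spectralOrderedRing A
  have h := CStarAlgebra.increasingApproximateUnit A
  exact ⟨_, h.neBot, h.eventually_norm, h.eventually_star_eq, h.tendsto_mul_left⟩

theorem TwoSidedIdeal.smul_mem_of_closed {A : Type*} [NonUnitalCStarAlgebra A]
    (I : TwoSidedIdeal A) (hI : IsClosed (I : Set A)) (c : ℂ) {a : A} (ha : a ∈ I) : c • a ∈ I := by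
  obtain ⟨l, hl, -, -, h⟩ := exists_approx_self A
  refine hI.mem_of_tendsto ((h a).const_smul c) (Eventually.of_forall fun e => ?_)
  show c • (a * e) ∈ I
  rw [← mul_smul_comm]
  exact I.mul_mem_right _ _ ha

/-- The self-adjoint part `I ∩ I*` of a closed two-sided ideal. -/
def TwoSidedIdeal.starPart {A : Type*} [NonUnitalCStarAlgebra A]
    (I : TwoSidedIdeal A) (hI : IsClosed (I : Set A)) : NonUnitalStarSubalgebra ℂ A where
  carrier := {x | x ∈ I ∧ star x ∈ I}
  add_mem' := fun {a b} ha hb => ⟨I.add_mem ha.1 hb.1, by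
    rw [star_add]; exact I.add_mem ha.2 hb.2⟩
  zero_mem' := ⟨I.zero_mem, by rw [star_zero]; exact I.zero_mem⟩
  mul_mem' := fun {a b} ha hb => ⟨I.mul_mem_right _ _ ha.1, by
    rw [star_mul]; exact I.mul_mem_right _ _ hb.2⟩
  smul_mem' := fun c a ha => ⟨I.smul_mem_of_closed hI c ha.1, by
    rw [star_smul]; exact I.smul_mem_of_closed hI _ ha.2⟩
  star_mem' := fun {a} ha => ⟨ha.2, by rw [star_star]; exact ha.1⟩

theorem TwoSidedIdeal.exists_approx {A : Type*} [NonUnitalCStarAlgebra A]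
    (I : TwoSidedIdeal A) (hI : IsClosed (I : Set A)) :
    ∃ l : Filter A, l.NeBot ∧ (∀ᶠ e in l, ‖e‖ ≤ 1) ∧ (∀ᶠ e in l, e ∈ I) ∧
      ∀ a ∈ I, Tendsto (fun e => a * e) l (𝓝 a) := by
  have hcl : IsClosed ((I.starPart hI : NonUnitalStarSubalgebra ℂ A) : Set A) :=
    hI.inter (hI.preimage continuous_star)
  haveI := hcl
  obtain ⟨l, hl, h1, h2, h3⟩ := exists_approx_self (I.starPart hI)
  refine ⟨l.map Subtype.val, hl.map _, ?_, ?_, ?_⟩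
  · exact h1
  · rw [eventually_map]
    exact Eventually.of_forall fun e => e.2.1
  · intro a ha
    rw [tendsto_map'_iff]
    have hm : star a * a ∈ I.starPart hI := by
      refine ⟨I.mul_mem_left _ _ ha, ?_⟩
      rw [star_mul, star_star]
      exact I.mul_mem_left _ _ ha
    have h4 : Tendsto (fun e : I.starPart hI => star a * a * (e : A)) l (𝓝 (star a * a)) :=
      (continuous_subtype_val.tendsto _).comp (h3 ⟨_, hm⟩)
    have h5 : Tendsto (fun e : I.starPart hI => 2 * ‖star a * a - star a * a * (e : A)‖) l (𝓝 0) := by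
      have := ((tendsto_const_nhds (x := star a * a)).sub h4).norm.const_mul 2
      simpa using this
    have h6 : Tendsto (fun e : I.starPart hI => ‖a - a * (e : A)‖ ^ 2) l (𝓝 0) := by
      refine squeeze_zero' (Eventually.of_forall fun e => by positivity) ?_ h5
      filter_upwards [h1] with e he
      rw [sq, ← CStarRing.norm_star_mul_self]
      have e1 : star (a - a * (e : A)) * (a - a * (e : A)) =
          (star a * a - star a * a * (e : A)) - star (e : A) * (star a * a - star a * a * (e : A)) := by
        simp only [star_sub, star_mul]
        noncomm_ring
      rw [e1]
      refine (norm_sub_le _ _).trans ?_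
      have := norm_mul_le (star (e : A)) (star a * a - star a * a * (e : A))
      rw [norm_star] at this
      have he' : ‖(e : A)‖ ≤ 1 := he
      have := mul_le_mul_of_nonneg_right he' (norm_nonneg (star a * a - star a * a * (e : A)))
      linarith
    have h7 : Tendsto (fun e : I.starPart hI => ‖a - a * (e : A)‖) l (𝓝 0) := by
      have := h6.sqrt
      simpa [Real.sqrt_sq] using this
    have h8 := tendsto_zero_iff_norm_tendsto_zero.2 h7
    have := (tendsto_const_nhds (x := a)).sub h8
    simpa [Function.comp_def] using this

theorem osProjNorm_tmul_le {A B : Type u} [NonUnitalCStarAlgebra A] [NonUnitalCStarAlgebra B]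
    (NA : ∀ p : ℕ, Matrix (Fin p) (Fin p) A → ℝ)
    (NB : ∀ q : ℕ, Matrix (Fin q) (Fin q) B → ℝ)
    (hNA : ∀ p, IsCStarNorm (NA p)) (hNB : ∀ q, IsCStarNorm (NB q)) (a : A) (b : B) :
    osProjNorm NA NB (a ⊗ₜ[ℂ] b) ≤ 4 * ‖a‖ * ‖b‖ := by
  have h1 : osProjNorm NA NB (a ⊗ₜ[ℂ] b) ≤
      NA 1 (Matrix.of fun _ _ => a) * NB 1 (Matrix.of fun _ _ => b) := by
    refine csInf_le ⟨0, ?_⟩ ⟨1, 1, fun _ => 1, Matrix.of fun _ _ => a, Matrix.of fun _ _ => b,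
      fun _ => 1, ?_, ?_⟩
    · rintro r ⟨p, q, α, v, w, β, -, rfl⟩
      have := (hNA p).nonneg' v
      have := (hNB q).nonneg' w
      positivity
    · simp [Fintype.sum_prod_type]
    · simp [Fintype.sum_prod_type]
  have h2 := (hNA 1).one.bound a
  have h3 := (hNB 1).one.bound b
  refine h1.trans ((mul_le_mul h2 h3 ((hNB 1).nonneg' _) (by positivity)).trans (le_of_eq ?_))
  ring

section
variable {A B X : Type u} [NonUnitalCStarAlgebra A] [NonUnitalCStarAlgebra B]
    [NonUnitalNormedRing X] [StarRing X] [NormedSpace ℂ X] [CompleteSpace X]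

theorem tensorIdeal_mono (ι : A ⊗[ℂ] B →ₗ[ℂ] X) {S S' : Set A} {T T' : Set B} (hS : S ⊆ S')
    (hT : T ⊆ T') : tensorIdeal ι S T ⊆ tensorIdeal ι S' T' :=
  closure_mono (Set.image_mono (Submodule.span_mono (Set.image2_subset hS hT)))

theorem tensorIdeal_mul_mem [IsScalarTower ℂ X X] (ν : A ⊗[ℂ] B → ℝ) (ι : A ⊗[ℂ] B →ₗ[ℂ] X)
    (hX : IsTensorCompletion ν X ι) {S S' : Set A} {T T' : Set B} (e : A) (f : B)
    (hS : ∀ a ∈ S, a * e ∈ S') (hT : ∀ b ∈ T, b * f ∈ T') {z : X} (hz : z ∈ tensorIdeal ι S T) :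
    z * ι (e ⊗ₜ[ℂ] f) ∈ tensorIdeal ι S' T' := by
  have hc : Continuous fun z : X => z * ι (e ⊗ₜ[ℂ] f) := continuous_mul_const _
  refine map_mem_closure (f := fun z : X => z * ι (e ⊗ₜ[ℂ] f)) hc hz ?_
  rintro _ ⟨u, hu, rfl⟩
  show ι u * ι (e ⊗ₜ[ℂ] f) ∈ _
  induction hu using Submodule.span_induction with
  | mem x hx =>
    obtain ⟨a, ha, b, hb, rfl⟩ := hx
    refine ⟨_, Submodule.subset_span ⟨a * e, hS a ha, b * f, hT b hb, rfl⟩, ?_⟩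
    exact (hX.mul_tmul _ _ _ _).symm
  | zero => exact ⟨0, Submodule.zero_mem _, by simp⟩
  | add x y _ _ hx hy =>
    obtain ⟨x', hx', hxe⟩ := hx
    obtain ⟨y', hy', hye⟩ := hy
    exact ⟨x' + y', Submodule.add_mem _ hx' hy', by rw [map_add, map_add, add_mul, hxe, hye]⟩
  | smul c x _ hx =>
    obtain ⟨x', hx', hxe⟩ := hx
    exact ⟨c • x', Submodule.smul_mem _ c hx', by rw [map_smul, map_smul, smul_mul_assoc, hxe]⟩

theorem tensorIdeal_tendsto [IsScalarTower ℂ X X] (ν : A ⊗[ℂ] B → ℝ) (ι : A ⊗[ℂ] B →ₗ[ℂ] X)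
    (hX : IsTensorCompletion ν X ι) (hν : ∀ a b, ν (a ⊗ₜ[ℂ] b) ≤ 4 * ‖a‖ * ‖b‖)
    {S : Set A} {T : Set B} (l : Filter A) (m : Filter B)
    (hl : ∀ᶠ e in l, ‖e‖ ≤ 1) (hm : ∀ᶠ e in m, ‖e‖ ≤ 1)
    (hl' : ∀ a ∈ S, Tendsto (fun e => a * e) l (𝓝 a))
    (hm' : ∀ b ∈ T, Tendsto (fun e => b * e) m (𝓝 b)) {z : X} (hz : z ∈ tensorIdeal ι S T) :
    Tendsto (fun p : A × B => z * ι (p.1 ⊗ₜ[ℂ] p.2)) (l ×ˢ m) (𝓝 z) := by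
  have hb : ∀ a b, ‖ι (a ⊗ₜ[ℂ] b)‖ ≤ 4 * ‖a‖ * ‖b‖ := fun a b => by
    rw [hX.norm_eq]; exact hν a b
  have alg : ∀ u ∈ Submodule.span ℂ (Set.image2 (fun a b => a ⊗ₜ[ℂ] b) S T),
      Tendsto (fun p : A × B => ι u * ι (p.1 ⊗ₜ[ℂ] p.2)) (l ×ˢ m) (𝓝 (ι u)) := by
    intro u hu
    induction hu using Submodule.span_induction with
    | mem x hx =>
      obtain ⟨a, ha, b, hb', rfl⟩ := hx
      simp only [hX.mul_tmul]
      let φ : A →ₗ[ℂ] B →ₗ[ℂ] X := (TensorProduct.mk ℂ A B).compr₂ ι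
      let Φ : A →L[ℂ] B →L[ℂ] X := φ.mkContinuous₂ 4 hb
      have hc : Continuous fun p : A × B => Φ p.1 p.2 :=
        (Φ.continuous.comp continuous_fst).clm_apply continuous_snd
      have h1 := (hl' a ha).comp (tendsto_fst (f := l) (g := m))
      have h2 := (hm' b hb').comp (tendsto_snd (f := l) (g := m))
      exact (hc.tendsto (a, b)).comp (h1.prodMk_nhds h2)
    | zero => simpa using tendsto_const_nhds
    | add x y _ _ hx hy => simpa [add_mul] using hx.add hy
    | smul c x _ hx => simpa [smul_mul_assoc] using hx.const_smul c
  have hev : ∀ᶠ p in l ×ˢ m, ‖ι (p.1 ⊗ₜ[ℂ] p.2)‖ ≤ 4 := by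
    filter_upwards [hl.prod_mk hm] with p hp
    refine (hb _ _).trans ?_
    have := mul_le_mul hp.1 hp.2 (norm_nonneg _) zero_le_one
    linarith
  rw [Metric.tendsto_nhds]
  intro ε hε
  obtain ⟨_, ⟨u, hu, rfl⟩, hd⟩ := Metric.mem_closure_iff.1 hz (ε / 6) (by positivity)
  filter_upwards [hev, Metric.tendsto_nhds.1 (alg u hu) (ε / 6) (by positivity)] with p hp1 hp2
  rw [dist_eq_norm] at hd hp2 ⊢
  set w := ι (p.1 ⊗ₜ[ℂ] p.2)
  have e1 : z * w - z = (z - ι u) * w + (ι u * w - ι u) - (z - ι u) := by noncomm_ring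
  rw [e1]
  have h1 := norm_sub_le ((z - ι u) * w + (ι u * w - ι u)) (z - ι u)
  have h2 := norm_add_le ((z - ι u) * w) (ι u * w - ι u)
  have h3 := norm_mul_le (z - ι u) w
  have h4 := mul_le_mul hd.le hp1 (norm_nonneg w) (by positivity)
  linarith

end

/-- For closed two-sided ideals `A₁, A₂` of `A` and `B₁, B₂` of `B`,
`(A₁ ⊗̂ B₁) ∩ (A₂ ⊗̂ B₂) = (A₁ ∩ A₂) ⊗̂ (B₁ ∩ B₂)` inside `A ⊗̂ B`. -/
theorem tensorIdeal_inter_tensorIdeal {A B X : Type u} [NonUnitalCStarAlgebra A] [NonUnitalCStarAlgebra B]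
    [NonUnitalNormedRing X] [StarRing X] [NormedSpace ℂ X] [CompleteSpace X]
    [IsScalarTower ℂ X X] [SMulCommClass ℂ X X]
    (NA : ∀ p : ℕ, Matrix (Fin p) (Fin p) A → ℝ)
    (NB : ∀ q : ℕ, Matrix (Fin q) (Fin q) B → ℝ)
    (hNA : ∀ p, IsCStarNorm (NA p)) (hNB : ∀ q, IsCStarNorm (NB q))
    (ι : A ⊗[ℂ] B →ₗ[ℂ] X) (hX : IsTensorCompletion (osProjNorm NA NB) X ι)
    (A₁ A₂ : TwoSidedIdeal A) (B₁ B₂ : TwoSidedIdeal B)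
    (hA₁ : IsClosed (A₁ : Set A)) (hA₂ : IsClosed (A₂ : Set A))
    (hB₁ : IsClosed (B₁ : Set B)) (hB₂ : IsClosed (B₂ : Set B)) :
    tensorIdeal ι (A₁ : Set A) (B₁ : Set B) ∩ tensorIdeal ι (A₂ : Set A) (B₂ : Set B) =
      tensorIdeal ι ((A₁ : Set A) ∩ (A₂ : Set A)) ((B₁ : Set B) ∩ (B₂ : Set B)) := by
  apply Set.Subset.antisymm
  · rintro z ⟨hz1, hz2⟩
    obtain ⟨l, hl, hl1, hl2, hl3⟩ := A₁.exists_approx hA₁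
    obtain ⟨m, hm, hm1, hm2, hm3⟩ := B₁.exists_approx hB₁
    have ht := tensorIdeal_tendsto _ ι hX (osProjNorm_tmul_le NA NB hNA hNB) l m hl1 hm1 hl3 hm3 hz1
    refine isClosed_closure.mem_of_tendsto ht ?_
    filter_upwards [hl2.prod_mk hm2] with p hp
    exact tensorIdeal_mul_mem (S' := (A₁ : Set A) ∩ (A₂ : Set A)) (T' := (B₁ : Set B) ∩ (B₂ : Set B))
      (S := (A₂ : Set A)) (T := (B₂ : Set B)) _ ι hX p.1 p.2
      (fun a ha => ⟨A₁.mul_mem_left _ _ hp.1, A₂.mul_mem_right _ _ ha⟩)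
      (fun b hb => ⟨B₁.mul_mem_left _ _ hp.2, B₂.mul_mem_right _ _ hb⟩) hz2
  · exact Set.subset_inter (tensorIdeal_mono ι Set.inter_subset_left Set.inter_subset_left)
      (tensorIdeal_mono ι Set.inter_subset_right Set.inter_subset_right)

end
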